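/- Let f(z) = z + Σ_{n≥2} a_n zⁿ be a typically real function on the open unit disc 𝔻 and let λ ≥ 1 be a real number. Then |λ a_4² − a_7| ≤ 16λ − 7. -/

import Mathlib

open MeasureTheory Filter Topology in
lemma zal_orth (k m : ℕ) (hm : 1 ≤ m) :
    ∫ x in (0:ℝ)..Real.pi, Real.sin (k * x) * Real.sin (m * x)
      = if k = m then Real.pi / 2 else 0 := by
  have e : ∀ x : ℝ, Real.sin (k * x) * Real.sin (m * x)
      = (Real.cos (((k:ℤ) - (m:ℤ) : ℤ) * x) - Real.cos (((k:ℤ) + (m:ℤ) : ℤ) * x)) / 2 := by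
    intro x
    push_cast
    rw [sub_mul, add_mul, Real.cos_sub, Real.cos_add]; ring
  have ic : ∀ j : ℤ, j ≠ 0 → ∫ x in (0:ℝ)..Real.pi, Real.cos (j * x) = 0 := by
    intro j hj
    have hj' : (j:ℝ) ≠ 0 := by exact_mod_cast hj
    rw [intervalIntegral.integral_comp_mul_left (fun x => Real.cos x) hj']
    simp [Real.sin_int_mul_pi]
  simp_rw [e]
  rw [intervalIntegral.integral_div, intervalIntegral.integral_sub
    (by apply Continuous.intervalIntegrable; fun_prop)
    (by apply Continuous.intervalIntegrable; fun_prop), ic ((k:ℤ) + m) (by omega)]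
  split_ifs with h
  · subst h; simp
  · rw [ic _ (by omega)]; simp

lemma zal_sin (n : ℕ) (x : ℝ) (hx : 0 ≤ Real.sin x) :
    |Real.sin (n * x)| ≤ n * Real.sin x := by
  induction n with
  | zero => simp
  | succ n ih =>
    push_cast
    rw [add_mul, one_mul, Real.sin_add]
    have h1 := Real.abs_cos_le_one x
    have h2 := Real.abs_cos_le_one (n * x)
    calc _ ≤ |Real.sin (n * x) * Real.cos x| + |Real.cos (n * x) * Real.sin x| := abs_add_le _ _
      _ ≤ |Real.sin (n * x)| * 1 + 1 * Real.sin x := by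
        rw [abs_mul, abs_mul, abs_of_nonneg hx]
        gcongr
      _ ≤ _ := by linarith

lemma zal_main
    (f : ℂ → ℂ) (a : ℕ → ℝ) (ha1 : a 1 = 1)
    (hf : ∀ z ∈ Metric.ball (0 : ℂ) 1, HasSum (fun k => (a k : ℂ) * z ^ k) (f z))
    (htr : ∀ z ∈ Metric.ball (0 : ℂ) 1, ((f z).im = 0 ↔ z.im = 0))
    (p : ℕ → ℝ) (s : Finset ℕ) (hs : ∀ m ∈ s, 1 ≤ m)
    (hp : ∀ x : ℝ, 0 ≤ Real.sin x → 0 ≤ ∑ m ∈ s, p m * Real.sin (m * x)) :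
    0 ≤ ∑ m ∈ s, p m * a m := by
  have key : ∀ r : ℝ, 0 < r → r < 1 → 0 ≤ ∑ m ∈ s, p m * (a m * r ^ m) := by
    intro r hr0 hr1
    have hsum : Summable (fun k => |a k| * r ^ k) := by
      have := (hf (r:ℂ) (by simp [abs_of_pos hr0, hr1])).summable.norm
      simpa [abs_of_pos hr0] using this
    let h : ℝ → ℝ := fun x => ∑' k, a k * r ^ k * Real.sin (k * x)
    have hbd : ∀ k x, ‖a k * r ^ k * Real.sin (k * x)‖ ≤ |a k| * r ^ k := by
      intro k x
      rw [norm_mul, norm_mul, Real.norm_eq_abs, Real.norm_eq_abs, Real.norm_eq_abs,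
        abs_of_pos (pow_pos hr0 k)]
      exact mul_le_of_le_one_right (by positivity) (Real.abs_sin_le_one _)
    have hcont : Continuous h := continuous_tsum (by intro k; fun_prop) hsum hbd
    have hh : ∀ x, HasSum (fun k => a k * r ^ k * Real.sin (k * x)) (h x) := fun x =>
      (Summable.of_norm_bounded hsum (fun k => hbd k x)).hasSum
    have hne : ∀ x ∈ Set.Ioo 0 Real.pi, h x ≠ 0 := by
      intro x hx h0
      have hz : (r : ℂ) * Complex.exp (x * Complex.I) ∈ Metric.ball (0:ℂ) 1 := by
        simp [Complex.norm_exp_ofReal_mul_I, abs_of_pos hr0, hr1]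
      have h1 := Complex.hasSum_im (hf _ hz)
      have h2 : h x = (f ((r : ℂ) * Complex.exp (x * Complex.I))).im := by
        refine (hh x).unique ?_
        convert h1 using 2 with k
        rw [mul_pow, ← Complex.exp_nat_mul, ← mul_assoc (k:ℂ), ← mul_assoc]
        have : ((a k : ℂ) * (r:ℂ) ^ k) = ((a k * r ^ k : ℝ) : ℂ) := by push_cast; rfl
        rw [this, Complex.im_ofReal_mul]
        have : ((k:ℂ) * (x:ℂ)) = ((k * x : ℝ) : ℂ) := by push_cast; rfl
        rw [this, Complex.exp_ofReal_mul_I_im]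
      rw [h2, htr _ hz, Complex.im_ofReal_mul, Complex.exp_ofReal_mul_I_im] at h0
      have := Real.sin_pos_of_mem_Ioo hx
      have := mul_pos hr0 this
      linarith
    have hint : ∀ m : ℕ, 1 ≤ m → ∫ x in (0:ℝ)..Real.pi, h x * Real.sin (m * x)
        = a m * r ^ m * (Real.pi / 2) := by
      intro m hm
      have H := intervalIntegral.hasSum_integral_of_dominated_convergence
        (μ := MeasureTheory.volume) (a := 0) (b := Real.pi)
        (F := fun k x => a k * r ^ k * Real.sin (k * x) * Real.sin (m * x))
        (f := fun x => h x * Real.sin (m * x))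
        (fun k _ => |a k| * r ^ k)
        (fun k => (by fun_prop : Continuous _).aestronglyMeasurable)
        (fun k => Filter.Eventually.of_forall (fun x _ => by
          rw [norm_mul]
          exact (mul_le_of_le_one_right (norm_nonneg _) (Real.abs_sin_le_one _)).trans (hbd k x)))
        (Filter.Eventually.of_forall (fun x _ => hsum))
        (by simp)
        (Filter.Eventually.of_forall (fun x _ => (hh x).mul_right _))
      refine H.unique ?_
      have e : ∀ k : ℕ, ∫ x in (0:ℝ)..Real.pi,
          a k * r ^ k * Real.sin (k * x) * Real.sin (m * x)
          = if k = m then a m * r ^ m * (Real.pi / 2) else 0 := by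
        intro k
        simp_rw [mul_assoc (a k * r ^ k)]
        rw [intervalIntegral.integral_const_mul, zal_orth k m hm]
        split_ifs with hk
        · rw [hk]
        · simp
      simp_rw [e]
      exact hasSum_ite_eq m _
    have hpos : ∀ x ∈ Set.Ioo 0 Real.pi, 0 ≤ h x := by
      intro x0 hx0
      by_contra! hneg
      have hall : ∀ x ∈ Set.Ioo 0 Real.pi, h x ≤ 0 := by
        intro x hx
        by_contra! hx'
        obtain ⟨y, hy, hy0⟩ := isPreconnected_Ioo.intermediate_value hx0 hx
          hcont.continuousOn ⟨hneg.le, hx'.le⟩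
        exact hne y hy hy0
      have h1 := hint 1 le_rfl
      have h2 : 0 ≤ ∫ x in (0:ℝ)..Real.pi, -(h x * Real.sin ((1:ℕ) * x)) := by
        rw [intervalIntegral.integral_of_le Real.pi_pos.le,
          MeasureTheory.integral_Ioc_eq_integral_Ioo]
        refine MeasureTheory.setIntegral_nonneg measurableSet_Ioo (fun x hx => ?_)
        have := Real.sin_pos_of_mem_Ioo hx
        have := hall x hx
        simp only [Nat.cast_one, one_mul]
        nlinarith
      rw [intervalIntegral.integral_neg, h1, ha1] at h2
      have := mul_pos hr0 Real.pi_pos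
      simp only [pow_one, one_mul] at h2
      linarith
    have h3 : 0 ≤ ∫ x in (0:ℝ)..Real.pi, ∑ m ∈ s, p m * (h x * Real.sin (m * x)) := by
      rw [intervalIntegral.integral_of_le Real.pi_pos.le,
        MeasureTheory.integral_Ioc_eq_integral_Ioo]
      refine MeasureTheory.setIntegral_nonneg measurableSet_Ioo (fun x hx => ?_)
      have h4 := mul_nonneg (hpos x hx) (hp x (Real.sin_pos_of_mem_Ioo hx).le)
      rw [Finset.mul_sum] at h4
      exact h4.trans_eq (Finset.sum_congr rfl (fun m _ => by ring))
    rw [intervalIntegral.integral_finsetSum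
      (fun m _ => by apply Continuous.intervalIntegrable; fun_prop)] at h3
    have h5 : ∑ m ∈ s, ∫ x in (0:ℝ)..Real.pi, p m * (h x * Real.sin (m * x))
        = (∑ m ∈ s, p m * (a m * r ^ m)) * (Real.pi / 2) := by
      rw [Finset.sum_mul]
      refine Finset.sum_congr rfl (fun m hm => ?_)
      rw [intervalIntegral.integral_const_mul, hint m (hs m hm)]; ring
    rw [h5] at h3
    exact nonneg_of_mul_nonneg_left h3 (by positivity)
  have hc : Continuous (fun r : ℝ => ∑ m ∈ s, p m * (a m * r ^ m)) := by fun_prop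
  have ht : Filter.Tendsto (fun r : ℝ => ∑ m ∈ s, p m * (a m * r ^ m)) (nhdsWithin 1 (Set.Iio 1))
      (nhds (∑ m ∈ s, p m * a m)) := by
    have := (hc.tendsto 1).mono_left (nhdsWithin_le_nhds (s := Set.Iio 1))
    simpa using this
  refine ge_of_tendsto ht ?_
  filter_upwards [Ioo_mem_nhdsLT (show (0:ℝ) < 1 by norm_num)] with r hr
  exact key r hr.1 hr.2

theorem zalcman_typically_real_a4_a7
    (f : ℂ → ℂ) (a : ℕ → ℝ)
    (ha0 : a 0 = 0) (ha1 : a 1 = 1)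
    (hf : ∀ z ∈ Metric.ball (0 : ℂ) 1, HasSum (fun k => (a k : ℂ) * z ^ k) (f z))
    (htr : ∀ z ∈ Metric.ball (0 : ℂ) 1, ((f z).im = 0 ↔ z.im = 0))
    (lam : ℝ) (hlam : 1 ≤ lam) :
    |lam * a 4 ^ 2 - a 7| ≤ 16 * lam - 7 := by
  have M := zal_main f a ha1 hf htr
  have hb : ∀ n : ℕ, 2 ≤ n → |a n| ≤ n := by
    intro n hn
    have hn1 : 1 ≠ n := by omega
    have A : ∀ e : ℝ, |e| ≤ 1 → 0 ≤ n + e * a n := by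
      intro e he
      have := M (fun m => if m = 1 then n else e) {1, n} (by simp; omega) (by
        intro x hx
        rw [Finset.sum_pair hn1]
        have h1 := zal_sin n x hx
        have h2 : |e * Real.sin (n * x)| ≤ n * Real.sin x := by
          rw [abs_mul]
          exact (mul_le_of_le_one_left (abs_nonneg _) he).trans h1
        have := (abs_le.mp h2).1
        simp only [if_true, if_neg hn1.symm, Nat.cast_one, one_mul]
        linarith)
      rw [Finset.sum_pair hn1] at this
      simpa [hn1.symm, ha1] using this
    have h1 := A 1 (by simp)
    have h2 := A (-1) (by simp)
    rw [abs_le]; constructor <;> linarith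
  have b3 := (abs_le.mp (hb 3 (by norm_num))).2
  have b5 := (abs_le.mp (hb 5 (by norm_num))).2
  have b4 := abs_le.mp (hb 4 (by norm_num))
  have b7 := abs_le.mp (hb 7 (by norm_num))
  have J : a 4 ^ 2 ≤ 1 + a 3 + a 5 + a 7 := by
    have := M (fun m => if m = 1 then 1 + a 4 ^ 2 else if m = 4 then -2 * a 4 else 1)
      {1, 3, 4, 5, 7} (by simp) (by
        intro x hx
        have e : Real.sin x * (8 * Real.cos x ^ 3 - 4 * Real.cos x - a 4) ^ 2
          = (1 + a 4 ^ 2) * Real.sin x + (Real.sin (3 * x) + (-2 * a 4 * Real.sin (4 * x)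
            + (Real.sin (5 * x) + Real.sin (7 * x)))) := by
          have s2 := Real.sin_two_mul x
          have c2 := Real.cos_two_mul x
          have s3 : Real.sin (3 * x) = Real.sin x * (4 * Real.cos x ^ 2 - 1) := by
            rw [show 3 * x = 2 * x + x by ring, Real.sin_add, s2, c2]; ring
          have c3 := Real.cos_three_mul x
          have s4 : Real.sin (4 * x) = Real.sin x * (8 * Real.cos x ^ 3 - 4 * Real.cos x) := by
            rw [show 4 * x = 2 * (2 * x) by ring, Real.sin_two_mul, s2, c2]; ring
          have c4 : Real.cos (4 * x) = 2 * (2 * Real.cos x ^ 2 - 1) ^ 2 - 1 := by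
            rw [show 4 * x = 2 * (2 * x) by ring, Real.cos_two_mul, c2]
          have s5 : Real.sin (5 * x) = Real.sin (4 * x) * Real.cos x
              + Real.cos (4 * x) * Real.sin x := by
            rw [← Real.sin_add]; ring_nf
          have s7 : Real.sin (7 * x) = Real.sin (4 * x) * Real.cos (3 * x)
              + Real.cos (4 * x) * Real.sin (3 * x) := by
            rw [← Real.sin_add]; ring_nf
          rw [s7, s5, c4, s4, c3, s3]; ring
        have := mul_nonneg hx (sq_nonneg (8 * Real.cos x ^ 3 - 4 * Real.cos x - a 4))
        rw [e] at this
        simpa using this)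
    simp [ha1] at this
    nlinarith
  push_cast at b3 b5 b4 b7
  have hsq : a 4 ^ 2 ≤ 16 := by nlinarith
  rw [abs_le]; constructor
  · nlinarith [sq_nonneg (a 4)]
  · nlinarith
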